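/- Let ℓ > 0, σ ∈ (0,1) ∪ (1,2), k a nonnegative integer, and λ_k = (k+2)(2k+3)/(ℓ³(k+1)). Then for every x ∈ (0, ℓ], the left Riemann–Liouville fractional derivative of order σ of the function t ↦ ℓ λ_k t · P_k^{(1,1)}(2t/ℓ - 1) exists at x and equals ((2k+3)Γ(k+3))/(ℓ²(k+1)Γ(k+2-σ)) · x^{1-σ} · P_k^{(1+σ, 1-σ)}(2x/ℓ - 1). -/

import Mathlib

/-!
The parameters of both Jacobi polynomials add up to `2`, so both are instances of one expansion at
the left endpoint (`jacobiP_eq_sum`):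

`P_n^{(2-b,b)}(2s-1) = ∑ⱼ (-1)^{n+j} C(n,j) (n+2+j)! / ((n+2)! n!) · Γ(n+b+1)/Γ(j+b+1) · s^j`.

It is proved by checking the three-term recurrence coefficient by coefficient (`jacCoef_rec`,
`jacCoef_rec_zero`); dividing the coefficients involved by the common factor `jacUnit` reduces each
check to an identity of rational functions, with no case distinction at the top degrees.

The parameter `b` enters the coefficient of `s^j` only through `Γ(n+b+1)/Γ(j+b+1)`. The derivative of
order `σ` sends `t^{j+1}` to `Γ(j+2)/Γ(j+2-σ) · x^{j+1-σ}`, hence it replaces the factor `1/Γ(j+2)` of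
`b = 1` by the factor `1/Γ(j+2-σ)` of `b = 1-σ` and produces `x^{1-σ}`. The action on powers
combines Euler's Beta integral (`integral_kernel_pow`) with `m` ordinary differentiations
(`iteratedDeriv_power_sum`).
-/

/-- Coefficient `A_j^{a,b}` in the three-term recurrence of Jacobi polynomials. -/
noncomputable def jacobiA (a b : ℝ) (j : ℕ) : ℝ :=
  (a + b + 2*j + 1) * (a + b + 2*j + 2) / (2*(j+1)*(a + b + j + 1))

/-- Coefficient `B_j^{a,b}` in the three-term recurrence of Jacobi polynomials. -/
noncomputable def jacobiB (a b : ℝ) (j : ℕ) : ℝ :=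
  (b^2 - a^2) * (a + b + 2*j + 1) / (2*(j+1)*(a + b + j + 1)*(a + b + 2*j))

/-- Coefficient `C_j^{a,b}` in the three-term recurrence of Jacobi polynomials. -/
noncomputable def jacobiC (a b : ℝ) (j : ℕ) : ℝ :=
  (a + j)*(b + j)*(a + b + 2*j + 2) / ((j+1)*(a + b + j + 1)*(a + b + 2*j))

/-- The Jacobi polynomial `P_j^{(a,b)}(x)` defined via the three-term recurrence. -/
noncomputable def jacobiP (a b : ℝ) : ℕ → ℝ → ℝ
  | 0, _ => 1
  | 1, x => ((a + b + 2)*x + a - b)/2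
  | (j+2), x =>
      (jacobiA a b (j+1) * x - jacobiB a b (j+1)) * jacobiP a b (j+1) x
        - jacobiC a b (j+1) * jacobiP a b j x

/-- The function whose `m`-th derivative is the left Riemann–Liouville fractional
derivative of order `σ` of `g` (with base point 0), i.e.
`y ↦ (1/Γ(m-σ)) ∫₀ʸ (y-t)^{m-σ-1} g(t) dt`. -/
noncomputable def leftRLFun (σ : ℝ) (m : ℕ) (g : ℝ → ℝ) : ℝ → ℝ :=
  fun y => (1 / Real.Gamma ((m : ℝ) - σ)) * ∫ t in (0:ℝ)..y, (y - t) ^ ((m : ℝ) - σ - 1) * g t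

/-- The function whose `m`-th derivative is the right Riemann–Liouville fractional
derivative of order `σ` of `g` on `[·, ℓ]`, i.e.
`y ↦ ((-1)^m/Γ(m-σ)) ∫ᵧ^ℓ (t-y)^{m-σ-1} g(t) dt`. -/
noncomputable def rightRLFun (σ : ℝ) (m : ℕ) (ℓ : ℝ) (g : ℝ → ℝ) : ℝ → ℝ :=
  fun y => ((-1:ℝ)^m / Real.Gamma ((m : ℝ) - σ)) * ∫ t in y..ℓ, (t - y) ^ ((m : ℝ) - σ - 1) * g t

/-- `F` has derivatives up to order `m` at `x` (so that `iteratedDeriv m F x`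
is a genuine `m`-th derivative). -/
def HasIterDerivAt (m : ℕ) (F : ℝ → ℝ) (x : ℝ) : Prop :=
  ∀ j < m, DifferentiableAt ℝ (iteratedDeriv j F) x

/-- Normalization constant `λ_k`. -/
noncomputable def lamCoef (ℓ : ℝ) (k : ℕ) : ℝ := (k+2)*(2*k+3)/(ℓ^3*(k+1))

/-- The basis function `φ_k(x) = λ_k x(ℓ-x) P_k^{(1,1)}(2x/ℓ - 1)`. -/
noncomputable def phiFun (ℓ : ℝ) (k : ℕ) (x : ℝ) : ℝ :=
  lamCoef ℓ k * (x*(ℓ-x)) * jacobiP 1 1 k (2*x/ℓ - 1)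

open Finset

/-! ### Expansion of shifted Jacobi polynomials at the left endpoint -/

/-- Coefficient of `s ^ j` in the expansion at `s = 0` of the shifted Jacobi polynomial
`P_n^{(2-b,b)}(2s - 1)`. It vanishes for `j > n` because the binomial coefficient does. -/
noncomputable def jacCoef (b : ℝ) (n j : ℕ) : ℝ :=
  (-1) ^ (n + j) * ((n + 2 + j).factorial : ℝ) * (n.choose j : ℝ) /
    (((n + 2).factorial : ℝ) * (n.factorial : ℝ)) *
    (Real.Gamma (n + b + 1) / Real.Gamma (j + b + 1))

/-- A common factor of `jacCoef b n j`, `jacCoef b (n+1) j` and `jacCoef b (n+2) j`: their ratios to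
it are rational in `n`, `j`, `b` without poles at the boundary indices `j = n + 1, n + 2`. -/
noncomputable def jacUnit (b : ℝ) (n j : ℕ) : ℝ :=
  (-1) ^ (n + j) * ((n + 2 + j).factorial : ℝ) * ((n + 2).choose j : ℝ) /
    (((n + 2).factorial : ℝ) * (n.factorial : ℝ)) *
    (Real.Gamma (n + b + 1) / Real.Gamma (j + b + 1))

lemma choose_cast_step (n j : ℕ) :
    (n.choose j : ℝ) * (n + 1) = ((n + 1).choose j : ℝ) * (n + 1 - j) := by
  rcases le_or_gt j (n + 1) with h | h
  · have := Nat.choose_mul_succ_eq n j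
    have h2 : ((n.choose j * (n + 1) : ℕ) : ℝ) = (((n + 1).choose j * (n + 1 - j) : ℕ) : ℝ) := by
      rw [this]
    rw [Nat.cast_mul, Nat.cast_mul, Nat.cast_sub h] at h2
    push_cast at h2
    exact h2
  · rw [Nat.choose_eq_zero_of_lt h, Nat.choose_eq_zero_of_lt (by omega : n < j)]
    simp

lemma jacCoef_eq_zero (b : ℝ) {n j : ℕ} (h : n < j) : jacCoef b n j = 0 := by
  simp [jacCoef, Nat.choose_eq_zero_of_lt h]

lemma jacCoef_zero_step (b : ℝ) (n j : ℕ) :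
    jacCoef b n j = (n + 2 - j) * (n + 1 - j) / ((n + 2) * (n + 1)) * jacUnit b n j := by
  have h1 := choose_cast_step n j
  have h2 := choose_cast_step (n + 1) j
  push_cast at h2
  have e : (n.choose j : ℝ) =
      (n + 2 - j) * (n + 1 - j) / ((n + 2) * (n + 1)) * ((n + 2).choose j : ℝ) := by
    field_simp
    linear_combination (n + 2 : ℝ) * h1 + (n + 1 - j : ℝ) * h2
  unfold jacCoef jacUnit
  rw [e]
  ring

lemma jacCoef_one_step {b : ℝ} (hb : -1 < b) (n j : ℕ) :
    jacCoef b (n + 1) j = -((n + b + 1) * (n + 3 + j) * (n + 2 - j) /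
      ((n + 3) * (n + 2) * (n + 1)) * jacUnit b n j) := by
  have h2 := choose_cast_step (n + 1) j
  push_cast at h2
  have e : ((n + 1).choose j : ℝ) = (n + 2 - j) / (n + 2) * ((n + 2).choose j : ℝ) := by
    field_simp
    linear_combination h2
  have f1 : ((n + 1 + 2 + j).factorial : ℝ) = (n + 3 + j) * ((n + 2 + j).factorial : ℝ) := by
    rw [show n + 1 + 2 + j = (n + 2 + j) + 1 by ring, Nat.factorial_succ]; push_cast; ring
  have f2 : ((n + 1 + 2).factorial : ℝ) = (n + 3) * ((n + 2).factorial : ℝ) := by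
    rw [show n + 1 + 2 = (n + 2) + 1 by ring, Nat.factorial_succ]; push_cast; ring
  have f3 : ((n + 1).factorial : ℝ) = (n + 1) * (n.factorial : ℝ) := by
    rw [Nat.factorial_succ]; push_cast; ring
  have hn : (0 : ℝ) ≤ n := n.cast_nonneg
  have g : Real.Gamma (((n + 1 : ℕ) : ℝ) + b + 1) = (n + b + 1) * Real.Gamma (n + b + 1) := by
    rw [← Real.Gamma_add_one (by linarith)]; congr 1; push_cast; ring
  have hf1 : ((n + 2).factorial : ℝ) ≠ 0 := by positivity
  have hf2 : (n.factorial : ℝ) ≠ 0 := by positivity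
  unfold jacCoef jacUnit
  rw [e, f1, f2, f3, g]
  field_simp
  ring

lemma jacCoef_two_step {b : ℝ} (hb : -1 < b) (n j : ℕ) :
    jacCoef b (n + 2) j = (n + b + 1) * (n + b + 2) * (n + 3 + j) * (n + 4 + j) /
      ((n + 4) * (n + 3) * (n + 2) * (n + 1)) * jacUnit b n j := by
  have f1 : ((n + 2 + 2 + j).factorial : ℝ) =
      (n + 4 + j) * (n + 3 + j) * ((n + 2 + j).factorial : ℝ) := by
    rw [show n + 2 + 2 + j = (n + 2 + j) + 1 + 1 by ring, Nat.factorial_succ, Nat.factorial_succ]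
    push_cast; ring
  have f2 : ((n + 2 + 2).factorial : ℝ) = (n + 4) * (n + 3) * ((n + 2).factorial : ℝ) := by
    rw [Nat.factorial_succ (n + 3), Nat.factorial_succ (n + 2)]
    push_cast; ring
  have f3 : ((n + 2).factorial : ℝ) = (n + 2) * (n + 1) * (n.factorial : ℝ) := by
    rw [Nat.factorial_succ, Nat.factorial_succ]; push_cast; ring
  have hn : (0 : ℝ) ≤ n := n.cast_nonneg
  have g : Real.Gamma (((n + 2 : ℕ) : ℝ) + b + 1) =
      (n + b + 2) * (n + b + 1) * Real.Gamma (n + b + 1) := by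
    rw [mul_assoc, ← Real.Gamma_add_one (by linarith),
      show (n : ℝ) + b + 2 = n + b + 1 + 1 by ring, ← Real.Gamma_add_one (by linarith)]
    congr 1; push_cast; ring
  have hf2 : (n.factorial : ℝ) ≠ 0 := by positivity
  unfold jacCoef jacUnit
  rw [f1, f2, f3, g]
  field_simp
  ring

/-- Term ratio of the hypergeometric expansion. It turns the shifted index `j` in `jacCoef_rec` into
`j + 1`, so that every term there is a multiple of `jacUnit b n (j + 1)`. -/
lemma jacUnit_succ {b : ℝ} (hb : -1 < b) (n j : ℕ) :
    (n + 3 + j) * (n + 2 - j) * jacUnit b n j =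
      -((j + 1) * (j + 1 + b) * jacUnit b n (j + 1)) := by
  have h2 : ((n + 2).choose (j + 1) : ℝ) * (j + 1) = ((n + 2).choose j : ℝ) * (n + 2 - j) := by
    have h := Nat.add_one_mul_choose_eq (n + 2) j
    have h4 : ((n + 2 + 1 : ℕ) : ℝ) * ((n + 2).choose j : ℝ) =
        ((n + 2 + 1).choose (j + 1) : ℝ) * (j + 1) := by exact_mod_cast h
    have h5 : ((n + 2 + 1).choose (j + 1) : ℝ) =
        ((n + 2).choose j : ℝ) + ((n + 2).choose (j + 1) : ℝ) := by
      exact_mod_cast Nat.choose_succ_succ (n + 2) j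
    rw [h5] at h4
    push_cast at h4
    linear_combination -h4
  have f1 : ((n + 2 + (j + 1)).factorial : ℝ) = (n + 3 + j) * ((n + 2 + j).factorial : ℝ) := by
    rw [show n + 2 + (j + 1) = (n + 2 + j) + 1 by ring, Nat.factorial_succ]; push_cast; ring
  have hj : (0 : ℝ) ≤ j := j.cast_nonneg
  have hpos : (0 : ℝ) < j + b + 1 := by linarith
  have g : Real.Gamma (((j + 1 : ℕ) : ℝ) + b + 1) = (j + b + 1) * Real.Gamma (j + b + 1) := by
    rw [← Real.Gamma_add_one hpos.ne']; congr 1; push_cast; ring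
  have hG := (Real.Gamma_pos_of_pos hpos).ne'
  have hf1 : ((n + 2).factorial : ℝ) ≠ 0 := by positivity
  have hf2 : (n.factorial : ℝ) ≠ 0 := by positivity
  unfold jacUnit
  rw [f1, g, ← add_assoc, pow_succ]
  field_simp
  linear_combination (-(j + b + 1) * Real.Gamma (n + b + 1)) * h2

/-- The three-term recurrence of the Jacobi polynomials at argument `2s - 1`, read off at
`s ^ (j + 1)`. -/
lemma jacCoef_rec {b : ℝ} (hb : -1 < b) (n j : ℕ) :
    jacCoef b (n + 2) (j + 1) = 2 * jacobiA (2 - b) b (n + 1) * jacCoef b (n + 1) j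
      - (jacobiA (2 - b) b (n + 1) + jacobiB (2 - b) b (n + 1)) * jacCoef b (n + 1) (j + 1)
      - jacobiC (2 - b) b (n + 1) * jacCoef b n (j + 1) := by
  have hw := jacUnit_succ hb n j
  have e : jacCoef b (n + 1) j = (n + b + 1) * (j + 1) * (j + 1 + b) /
      ((n + 3) * (n + 2) * (n + 1)) * jacUnit b n (j + 1) := by
    rw [jacCoef_one_step hb]
    field_simp
    linear_combination (-(n + b + 1)) * hw
  rw [e, jacCoef_zero_step b n, jacCoef_one_step hb n, jacCoef_two_step hb]
  unfold jacobiA jacobiB jacobiC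
  push_cast
  have d : (2 : ℝ) - b + b = 2 := by ring
  simp only [d]
  have n1 : (2 : ℝ) + 2 * (n + 1) ≠ 0 := by positivity
  have n2 : (2 : ℝ) + (n + 1) + 1 ≠ 0 := by positivity
  field_simp
  ring

/-- The constant term of the three-term recurrence at argument `2s - 1`. -/
lemma jacCoef_rec_zero {b : ℝ} (hb : -1 < b) (n : ℕ) :
    jacCoef b (n + 2) 0 =
      - (jacobiA (2 - b) b (n + 1) + jacobiB (2 - b) b (n + 1)) * jacCoef b (n + 1) 0
      - jacobiC (2 - b) b (n + 1) * jacCoef b n 0 := by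
  rw [jacCoef_zero_step b n, jacCoef_one_step hb n, jacCoef_two_step hb]
  unfold jacobiA jacobiB jacobiC
  push_cast
  have d : (2 : ℝ) - b + b = 2 := by ring
  simp only [d]
  have n1 : (2 : ℝ) + 2 * (n + 1) ≠ 0 := by positivity
  have n2 : (2 : ℝ) + (n + 1) + 1 ≠ 0 := by positivity
  field_simp
  ring

lemma sum_jacCoef_pad (b s : ℝ) {n N : ℕ} (h : n < N) :
    ∑ j ∈ range (n + 1), jacCoef b n j * s ^ j = ∑ j ∈ range N, jacCoef b n j * s ^ j := by
  apply Finset.sum_subset (by simpa using h)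
  intro j _ hj
  rw [jacCoef_eq_zero b (by simpa using hj), zero_mul]

/-- Expansion at the left endpoint of the Jacobi polynomials whose parameters add up to `2`. -/
lemma jacobiP_eq_sum {b : ℝ} (hb : -1 < b) (s : ℝ) (n : ℕ) :
    jacobiP (2 - b) b n (2 * s - 1) = ∑ j ∈ range (n + 1), jacCoef b n j * s ^ j := by
  induction n using Nat.twoStepInduction with
  | zero =>
    have hG := (Real.Gamma_pos_of_pos (by linarith : (0 : ℝ) < b + 1)).ne'
    simp [jacobiP, jacCoef, hG]
  | one =>
    have hG := (Real.Gamma_pos_of_pos (by linarith : (0 : ℝ) < b + 1)).ne'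
    have g : Real.Gamma (1 + b + 1) = (b + 1) * Real.Gamma (b + 1) := by
      rw [← Real.Gamma_add_one (by linarith)]; congr 1; ring
    have hb' : b + 1 ≠ 0 := by linarith
    simp [jacobiP, jacCoef, sum_range_succ, g, hG, Nat.factorial]
    field_simp
    ring
  | more n ih0 ih1 =>
    rw [jacobiP, ih0, ih1, sum_jacCoef_pad b s (show n < n + 3 by omega),
      sum_range_succ' _ (n + 2), sum_range_succ' _ (n + 2)]
    have h1 := sum_jacCoef_pad b s (show n + 1 < n + 3 by omega)
    rw [sum_range_succ' _ (n + 2)] at h1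
    have h2 : ∑ j ∈ range (n + 2), jacCoef b (n + 2) (j + 1) * s ^ (j + 1) =
        2 * jacobiA (2 - b) b (n + 1) * s * ∑ j ∈ range (n + 2), jacCoef b (n + 1) j * s ^ j
        - (jacobiA (2 - b) b (n + 1) + jacobiB (2 - b) b (n + 1)) *
          ∑ j ∈ range (n + 2), jacCoef b (n + 1) (j + 1) * s ^ (j + 1)
        - jacobiC (2 - b) b (n + 1) *
          ∑ j ∈ range (n + 2), jacCoef b n (j + 1) * s ^ (j + 1) := by
      simp only [mul_sum, ← sum_sub_distrib]
      refine sum_congr rfl fun j _ => ?_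
      rw [jacCoef_rec hb]
      ring
    rw [h2, jacCoef_rec_zero hb]
    simp only [pow_zero, mul_one] at h1 ⊢
    linear_combination (-(jacobiA (2 - b) b (n + 1) + jacobiB (2 - b) b (n + 1))) * h1

/-! ### Fractional integrals of powers and their derivatives -/

lemma intervalIntegrable_kernel_pow {μ y : ℝ} (hμ : 0 < μ) (n : ℕ) :
    IntervalIntegrable (fun t : ℝ => (y - t) ^ (μ - 1) * t ^ n) MeasureTheory.volume 0 y := by
  have h := (intervalIntegral.intervalIntegrable_rpow' (a := y) (b := 0)
    (by linarith : -1 < μ - 1)).comp_sub_left y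
  simp only [sub_self, sub_zero] at h
  exact h.mul_continuousOn (by fun_prop)

/-- Euler's Beta integral on `[0, y]`, for an integer power. -/
lemma integral_kernel_pow {μ y : ℝ} (hμ : 0 < μ) (hy : 0 < y) (n : ℕ) :
    ∫ t in (0 : ℝ)..y, (y - t) ^ (μ - 1) * t ^ n =
      Real.Gamma μ * Real.Gamma (n + 1) / Real.Gamma (μ + n + 1) * y ^ (μ + n) := by
  have hn : (0 : ℝ) < n + 1 := by positivity
  have h := Complex.betaIntegral_scaled ((n + 1 : ℝ) : ℂ) (μ : ℂ) hy
  have hB := Complex.Gamma_mul_Gamma_eq_betaIntegral (s := ((n + 1 : ℝ) : ℂ)) (t := (μ : ℂ))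
    (by rw [Complex.ofReal_re]; exact hn) (by rw [Complex.ofReal_re]; exact hμ)
  rw [← Complex.ofReal_add, Complex.Gamma_ofReal, Complex.Gamma_ofReal, Complex.Gamma_ofReal] at hB
  have hG := (Real.Gamma_pos_of_pos (by linarith : (0 : ℝ) < n + 1 + μ)).ne'
  have hG' : ((Real.Gamma (n + 1 + μ) : ℝ) : ℂ) ≠ 0 := Complex.ofReal_ne_zero.mpr hG
  rw [mul_comm _ (Complex.betaIntegral _ _), ← div_eq_iff hG'] at hB
  have h2 : ((∫ t in (0 : ℝ)..y, (y - t) ^ (μ - 1) * t ^ n : ℝ) : ℂ) =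
      ∫ x in (0 : ℝ)..y, (x : ℂ) ^ (((n + 1 : ℝ) : ℂ) - 1) * ((y : ℂ) - x) ^ ((μ : ℂ) - 1) := by
    rw [← intervalIntegral.integral_ofReal]
    refine intervalIntegral.integral_congr fun t ht => ?_
    rw [Set.uIcc_of_le hy.le] at ht
    have e1 : ((y : ℂ) - t) ^ ((μ : ℂ) - 1) = (((y - t) ^ (μ - 1) : ℝ) : ℂ) := by
      rw [Complex.ofReal_cpow (by linarith [ht.2])]; push_cast; rfl
    have e2 : (t : ℂ) ^ (((n + 1 : ℝ) : ℂ) - 1) = (t : ℂ) ^ n := by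
      rw [← Complex.cpow_natCast]; congr 1; push_cast; ring
    simp only [e1, e2]
    push_cast
    ring
  rw [h, ← hB] at h2
  have e3 : (y : ℂ) ^ (((n + 1 : ℝ) : ℂ) + μ - 1) = ((y ^ (μ + n) : ℝ) : ℂ) := by
    rw [Complex.ofReal_cpow hy.le]; congr 1; push_cast; ring
  rw [e3] at h2
  have h3 : (∫ t in (0 : ℝ)..y, (y - t) ^ (μ - 1) * t ^ n) =
      y ^ (μ + n) * (Real.Gamma (n + 1) * Real.Gamma μ / Real.Gamma (n + 1 + μ)) := by
    exact_mod_cast h2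
  rw [h3, show (n : ℝ) + 1 + μ = μ + n + 1 by ring]
  ring

/-- Each differentiation lowers the exponent and the Gamma argument of
`y ^ (r + i + 1) / Γ(r + i + 2)` by one; this is valid as long as the exponents stay above `-1`. -/
lemma iteratedDeriv_power_sum (d : ℕ → ℝ) (N : ℕ) (r : ℝ) (F : ℝ → ℝ)
    (hF : ∀ y, 0 < y → F y =
      ∑ i ∈ range N, d i * (y ^ (r + i + 1) / Real.Gamma (r + i + 2))) (p : ℕ)
    (hp : -2 < r - p) :
    (∀ y, 0 < y → iteratedDeriv p F y =
      ∑ i ∈ range N, d i * (y ^ (r - p + i + 1) / Real.Gamma (r - p + i + 2))) ∧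
    ∀ j < p, ∀ y, 0 < y → DifferentiableAt ℝ (iteratedDeriv j F) y := by
  induction p with
  | zero => exact ⟨by simpa using hF, by simp⟩
  | succ p ih =>
    push_cast at hp
    obtain ⟨h1, h2⟩ := ih (by linarith)
    have key : ∀ y, 0 < y → HasDerivAt (iteratedDeriv p F)
        (∑ i ∈ range N, d i * (y ^ (r - (p + 1 : ℕ) + i + 1) /
          Real.Gamma (r - (p + 1 : ℕ) + i + 2))) y := by
      intro y hy
      have hs : HasDerivAt (fun y : ℝ => ∑ i ∈ range N, d i * (y ^ (r - p + i + 1) /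
          Real.Gamma (r - p + i + 2))) (∑ i ∈ range N, d i * (y ^ (r - (p + 1 : ℕ) + i + 1) /
          Real.Gamma (r - (p + 1 : ℕ) + i + 2))) y := by
        refine HasDerivAt.fun_sum fun i _ => HasDerivAt.const_mul _ ?_
        have hi : (0 : ℝ) ≤ i := i.cast_nonneg
        have hpos : 0 < r - p + i + 1 := by linarith
        have hG := (Real.Gamma_pos_of_pos hpos).ne'
        have hd := ((Real.hasDerivAt_rpow_const (x := y) (p := r - p + i + 1)
          (Or.inl hy.ne')).div_const (Real.Gamma (r - p + i + 2)))
        refine hd.congr_deriv ?_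
        rw [show r - p + i + 2 = (r - p + i + 1) + 1 by ring, Real.Gamma_add_one hpos.ne']
        push_cast
        rw [show r - (p + 1) + i + 2 = r - p + i + 1 by ring,
          show r - (p + 1) + i + 1 = r - p + i + 1 - 1 by ring]
        field_simp
      refine hs.congr_of_eventuallyEq ?_
      filter_upwards [lt_mem_nhds hy] with z hz using h1 z hz
    refine ⟨fun y hy => by rw [iteratedDeriv_succ]; exact (key y hy).deriv, fun j hj y hy => ?_⟩
    rcases Nat.lt_succ_iff_lt_or_eq.mp hj with h | rfl
    · exact h2 j h y hy
    · exact (key y hy).differentiableAt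

/-- Closed form of the left Riemann–Liouville fractional derivative of
order `σ ∈ (0,1) ∪ (1,2)` of `t ↦ ℓ λ_k t P_k^{(1,1)}(2t/ℓ - 1)` at `x ∈ (0, ℓ]`. -/
theorem left_RL_linear_part
    (ℓ σ : ℝ) (hℓ : 0 < ℓ) (hσ : σ ∈ Set.Ioo (0:ℝ) 1 ∪ Set.Ioo (1:ℝ) 2)
    (m : ℕ) (hm : (m : ℝ) - 1 ≤ σ ∧ σ < m)
    (k : ℕ) (x : ℝ) (hx : x ∈ Set.Ioc 0 ℓ) :
    HasIterDerivAt m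
      (leftRLFun σ m (fun t => ℓ * lamCoef ℓ k * t * jacobiP 1 1 k (2*t/ℓ - 1))) x ∧
    iteratedDeriv m
      (leftRLFun σ m (fun t => ℓ * lamCoef ℓ k * t * jacobiP 1 1 k (2*t/ℓ - 1))) x =
      (2*(k:ℝ)+3) * Real.Gamma ((k:ℝ)+3) / (ℓ^2*((k:ℝ)+1)*Real.Gamma ((k:ℝ)+2-σ)) *
        x ^ (1 - σ) * jacobiP (1+σ) (1-σ) k (2*x/ℓ - 1) := by
  have hσ2 : σ < 2 := by rcases hσ with h | h <;> linarith [h.2]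
  have hμ : 0 < (m : ℝ) - σ := by linarith [hm.2]
  have hx0 : 0 < x := hx.1
  have hGμ := (Real.Gamma_pos_of_pos hμ).ne'
  have hJ1 : ∀ t, jacobiP 1 1 k (2 * t / ℓ - 1) =
      ∑ i ∈ range (k + 1), jacCoef 1 k i * (t / ℓ) ^ i := by
    intro t
    have := jacobiP_eq_sum (b := 1) (by norm_num) (t / ℓ) k
    rw [← this]
    norm_num [mul_div_assoc]
  -- Integrating term by term, with the factor `Γ(i + 2)` of the Beta integral put into the coefficient.
  have hF : ∀ y, 0 < y →
      leftRLFun σ m (fun t => ℓ * lamCoef ℓ k * t * jacobiP 1 1 k (2*t/ℓ - 1)) y =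
      ∑ i ∈ range (k + 1), (ℓ * lamCoef ℓ k * jacCoef 1 k i / ℓ ^ i * Real.Gamma (i + 2)) *
        (y ^ (m - σ + i + 1) / Real.Gamma (m - σ + i + 2)) := by
    intro y hy
    have e : ∀ t : ℝ, (y - t) ^ ((m : ℝ) - σ - 1) *
        (ℓ * lamCoef ℓ k * t * jacobiP 1 1 k (2*t/ℓ - 1)) =
        ∑ i ∈ range (k + 1), (ℓ * lamCoef ℓ k * jacCoef 1 k i / ℓ ^ i) *
          ((y - t) ^ ((m : ℝ) - σ - 1) * t ^ (i + 1)) := by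
      intro t
      rw [hJ1, mul_sum, mul_sum]
      refine sum_congr rfl fun i _ => ?_
      rw [div_pow]
      ring
    unfold leftRLFun
    simp only [e]
    rw [intervalIntegral.integral_finsetSum fun i _ =>
      (intervalIntegrable_kernel_pow hμ (i + 1)).const_mul _, mul_sum]
    refine sum_congr rfl fun i _ => ?_
    rw [intervalIntegral.integral_const_mul, integral_kernel_pow hμ hy]
    push_cast
    rw [show (i : ℝ) + 1 + 1 = i + 2 by ring,
      show (m : ℝ) - σ + (i + 1) + 1 = m - σ + i + 2 by ring,
      show (m : ℝ) - σ + (i + 1) = m - σ + i + 1 by ring]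
    field_simp
  obtain ⟨h1, h2⟩ := iteratedDeriv_power_sum _ _ _ _ hF m (by linarith)
  refine ⟨fun j hj => h2 j hj x hx0, ?_⟩
  rw [h1 x hx0]
  have hJ2 : jacobiP (1 + σ) (1 - σ) k (2 * x / ℓ - 1) =
      ∑ i ∈ range (k + 1), jacCoef (1 - σ) k i * (x / ℓ) ^ i := by
    rw [← jacobiP_eq_sum (b := 1 - σ) (by linarith) (x / ℓ) k,
      show 2 - (1 - σ) = 1 + σ by ring, mul_div_assoc]
  rw [hJ2, mul_sum]
  refine sum_congr rfl fun i _ => ?_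
  have hi : (0 : ℝ) ≤ i := i.cast_nonneg
  have hk : (0 : ℝ) ≤ k := k.cast_nonneg
  have hGi := (Real.Gamma_pos_of_pos (by linarith : 0 < (i : ℝ) + 2)).ne'
  have hGis := (Real.Gamma_pos_of_pos (by linarith : 0 < (i : ℝ) + 2 - σ)).ne'
  have hGks := (Real.Gamma_pos_of_pos (by linarith : 0 < (k : ℝ) + 2 - σ)).ne'
  have hGk : Real.Gamma ((k : ℝ) + 3) = (k + 2) * Real.Gamma (k + 2) := by
    rw [← Real.Gamma_add_one (by linarith)]; congr 1; ring
  have hpow : x ^ ((m : ℝ) - σ - m + i + 1) = x ^ (1 - σ) * x ^ i := by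
    rw [← Real.rpow_natCast, ← Real.rpow_add hx0]; congr 1; ring
  rw [hpow, hGk, show (m : ℝ) - σ - m + i + 2 = i + 2 - σ by ring, div_pow]
  -- The two coefficients differ only in their Gamma quotients `Γ(k+2)/Γ(i+2)` and
  -- `Γ(k+2-σ)/Γ(i+2-σ)`.
  unfold jacCoef lamCoef
  rw [show (k : ℝ) + 1 + 1 = k + 2 by ring, show (i : ℝ) + 1 + 1 = i + 2 by ring,
    show (k : ℝ) + (1 - σ) + 1 = k + 2 - σ by ring,
    show (i : ℝ) + (1 - σ) + 1 = i + 2 - σ by ring]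
  field_simp
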